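/- Every reflection factorization of a Coxeter element of G4 of length at least four that contains reflections from both conjugacy classes R₁ and R₂ has, in its Hurwitz orbit, a factorization with two consecutive equal entries. -/

import Mathlib

noncomputable section

open Matrix Complex

/-- The `i`-th Hurwitz move on length-`k` tuples of group elements. -/
def IsHurwitzMove {G : Type*} [Group G] {k : ℕ} (t t' : Fin k → G) : Prop :=
  ∃ i : ℕ, ∃ h : i + 1 < k,
    t' ⟨i, Nat.lt_of_succ_lt h⟩ = t ⟨i + 1, h⟩ ∧
    t' ⟨i + 1, h⟩ = (t ⟨i + 1, h⟩)⁻¹ * t ⟨i, Nat.lt_of_succ_lt h⟩ * t ⟨i + 1, h⟩ ∧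
    ∀ j : Fin k, (j : ℕ) ≠ i → (j : ℕ) ≠ i + 1 → t' j = t j

/-- Two tuples lie in the same Hurwitz orbit. -/
def SameHurwitzOrbit {G : Type*} [Group G] {k : ℕ} (t t' : Fin k → G) : Prop :=
  Relation.EqvGen IsHurwitzMove t t'

/-- A group element `r` appears (as an entry) in the Hurwitz orbit of the tuple `t`. -/
def Appears {G : Type*} [Group G] {k : ℕ} (r : G) (t : Fin k → G) : Prop :=
  ∃ s : Fin k → G, SameHurwitzOrbit t s ∧ ∃ j, s j = r

/-- A tuple has two consecutive equal entries. -/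
def HasConsecutiveEqualPair {G : Type*} [Group G] {k : ℕ} (t : Fin k → G) : Prop :=
  ∃ i : ℕ, ∃ h : i + 1 < k, t ⟨i, Nat.lt_of_succ_lt h⟩ = t ⟨i + 1, h⟩

/-- Replace the `p`-th entry of a tuple by two consecutive copies of its square. -/
def doubleAt {G : Type*} [Group G] {m : ℕ} (t : Fin m → G) (p : Fin m) : Fin (m + 1) → G :=
  fun j =>
    if h1 : (j : ℕ) < (p : ℕ) then t ⟨j, h1.trans p.isLt⟩
    else if h2 : (j : ℕ) ≤ (p : ℕ) + 1 then (t p) ^ 2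
    else t ⟨(j : ℕ) - 1, by have := j.isLt; omega⟩

/-- `ω = e^(2πi/3)`. -/
def ω : ℂ := Complex.exp (2 * Real.pi * Complex.I / 3)

def AMat : Matrix (Fin 2) (Fin 2) ℂ := !![1, 0; 0, ω]

def BMat : Matrix (Fin 2) (Fin 2) ℂ :=
  !![(ω - ω ^ 2) / 3, ω ^ 2; (-2 * ω ^ 2) / 3, (-ω - 2 * ω ^ 2) / 3]

/-- The complex reflection group G₄ as the subgroup of GL(2,ℂ) generated by `AMat`, `BMat`. -/
def G4 : Subgroup (GL (Fin 2) ℂ) :=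
  Subgroup.closure {g : GL (Fin 2) ℂ |
    (g : Matrix (Fin 2) (Fin 2) ℂ) = AMat ∨ (g : Matrix (Fin 2) (Fin 2) ℂ) = BMat}

/-- The matrix underlying an element of G₄. -/
def mat (t : G4) : Matrix (Fin 2) (Fin 2) ℂ := ((t : GL (Fin 2) ℂ) : Matrix (Fin 2) (Fin 2) ℂ)

/-- A reflection in G₄: a non-identity element with eigenvalue 1. -/
def IsReflection (t : G4) : Prop := t ≠ 1 ∧ (mat t - 1).det = 0

/-- The conjugacy class R₁ of reflections of determinant ω. -/
def R1 : Set G4 := {t | IsReflection t ∧ (mat t).det = ω}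

/-- The conjugacy class R₂ of reflections of determinant ω². -/
def R2 : Set G4 := {t | IsReflection t ∧ (mat t).det = ω ^ 2}

/-- A Coxeter element of G₄: an element with a primitive 6th root of unity as eigenvalue. -/
def IsCoxeter (c : G4) : Prop :=
  ∃ ζ : ℂ, IsPrimitiveRoot ζ 6 ∧ (mat c - ζ • (1 : Matrix (Fin 2) (Fin 2) ℂ)).det = 0

/-- The relators of G₅: a³, b³, abab(baba)⁻¹. -/
def g5Rels : Set (FreeGroup (Fin 2)) :=
  {FreeGroup.of 0 ^ 3, FreeGroup.of 1 ^ 3,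
    FreeGroup.of 0 * FreeGroup.of 1 * FreeGroup.of 0 * FreeGroup.of 1 *
      (FreeGroup.of 1 * FreeGroup.of 0 * FreeGroup.of 1 * FreeGroup.of 0)⁻¹}

/-- The complex reflection group G₅, by its presentation ⟨a,b | a³ = b³ = 1, abab = baba⟩. -/
abbrev G5 := PresentedGroup g5Rels

def ga : G5 := PresentedGroup.of 0
def gb : G5 := PresentedGroup.of 1

/-- The conjugacy class of `a` in G₅. -/
def S1 : Set G5 := {t | IsConj ga t}
/-- The conjugacy class of `b` in G₅. -/
def S2 : Set G5 := {t | IsConj gb t}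
/-- The conjugacy class of `a²` in G₅. -/
def S3 : Set G5 := {t | IsConj (ga ^ 2) t}
/-- The conjugacy class of `b²` in G₅. -/
def S4 : Set G5 := {t | IsConj (gb ^ 2) t}

/-- A reflection in G₅: a conjugate of a, b, a², or b². -/
def IsReflection5 (t : G5) : Prop := t ∈ S1 ∨ t ∈ S2 ∨ t ∈ S3 ∨ t ∈ S4

/-- A Coxeter element of G₅: an element of order 12. -/
def IsCoxeter5 (c : G5) : Prop := orderOf c = 12

/-!
`G₄` is the image of `SL(2, 𝔽₃)` under the even part of its Weil representation, and the two
classes of reflections correspond to the two classes of four transvections. So it suffices to study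
the Hurwitz action on lists of transvections.

Three transvections `a, b, c` of one class can be moved to contain a pair unless `a * b * c = -1`.
If a fourth transvection `d` is present, sliding it through `a, b, c` conjugates `c` or `b`, which
changes that product unless `d` commutes with both; as transvections commute only when equal or
inverse, a pair always arises. Since Hurwitz moves can sort a list by classes, this leaves the lists
`a, b, c, d` with `a, b` in one class and `c, d` in the other. There `-(c * d)` belongs to the class
of `a` and `b` unless `c = d`. As for three transvections of one class, either `a = b`, or a move
makes `-(c * d)` the second entry, from which two further moves produce a pair, or
`a * b * (-(c * d)) = -1`, that is, `a * b * c * d = 1`, which is impossible for a factorization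
of a Coxeter element.
-/

open scoped MatrixGroups

section Hurwitz

variable {G H : Type*} [Group G] [Group H]

/-- A single Hurwitz move, on lists instead of tuples: the entry `x` jumps to the right over its
neighbour `y` and is conjugated by it. -/
inductive HurwitzStep : List G → List G → Prop
  | mk (p : List G) (x y : G) (q : List G) :
      HurwitzStep (p ++ x :: y :: q) (p ++ y :: (y⁻¹ * x * y) :: q)

/-- Two lists lie in the same Hurwitz orbit. -/
def HurwitzEquiv : List G → List G → Prop := Relation.EqvGen HurwitzStep

/-- Some list in the Hurwitz orbit of `l` has two consecutive equal entries. -/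
def OrbitHasRepeat (l : List G) : Prop := ∃ p x q, HurwitzEquiv l (p ++ x :: x :: q)

theorem HurwitzStep.isHurwitzMove {l m : List G} (h : HurwitzStep l m) {k : ℕ} {t s : Fin k → G}
    (ht : List.ofFn t = l) (hs : List.ofFn s = m) : IsHurwitzMove t s := by
  obtain ⟨p, x, y, q⟩ := h
  have ht' (i : Fin k) : (p ++ x :: y :: q)[(i : ℕ)]? = some (t i) := by simp [← ht]
  have hs' (i : Fin k) : (p ++ y :: (y⁻¹ * x * y) :: q)[(i : ℕ)]? = some (s i) := by simp [← hs]
  have hlen : p.length + 1 < k := by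
    have := congrArg List.length ht
    simp only [List.length_ofFn, List.length_append, List.length_cons] at this
    omega
  have hx := ht' ⟨p.length, by omega⟩
  have hy := ht' ⟨p.length + 1, hlen⟩
  have hy' := hs' ⟨p.length, by omega⟩
  have hxy := hs' ⟨p.length + 1, hlen⟩
  simp only [List.getElem?_append_right, le_refl, tsub_self, List.getElem?_cons_zero,
    Nat.le_add_right, add_tsub_cancel_left, List.getElem?_cons_succ, Option.some.injEq]
    at hx hy hy' hxy
  refine ⟨p.length, hlen, by rw [← hy', hy], by rw [← hxy, ← hx, ← hy], fun j hj hj' => ?_⟩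
  have hj := (hs' j).symm.trans (.trans ?_ (ht' j))
  · simpa using hj
  · rcases lt_or_ge (j : ℕ) p.length with hlt | hge
    · rw [List.getElem?_append_left hlt, List.getElem?_append_left hlt]
    · obtain ⟨n, hn⟩ : ∃ n, (j : ℕ) = p.length + (n + 2) := ⟨j - p.length - 2, by omega⟩
      simp [hn, List.getElem?_append_right]

namespace HurwitzEquiv

theorem refl (l : List G) : HurwitzEquiv l l := Relation.EqvGen.refl l

theorem symm {l m : List G} (h : HurwitzEquiv l m) : HurwitzEquiv m l := Relation.EqvGen.symm _ _ h

theorem trans {l m n : List G} (h : HurwitzEquiv l m) (h' : HurwitzEquiv m n) :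
    HurwitzEquiv l n := Relation.EqvGen.trans _ _ _ h h'

theorem append {l m : List G} (h : HurwitzEquiv l m) (p q : List G) :
    HurwitzEquiv (p ++ l ++ q) (p ++ m ++ q) := by
  induction h with
  | rel l m hlm =>
    obtain ⟨p', x, y, q'⟩ := hlm
    have h : HurwitzEquiv _ _ := .rel _ _ (HurwitzStep.mk (p ++ p') x y (q' ++ q))
    simpa using h
  | refl l => exact refl _
  | symm l m _ ih => exact ih.symm
  | trans l m n _ _ ih ih' => exact ih.trans ih'

theorem cons {l m : List G} (h : HurwitzEquiv l m) (x : G) : HurwitzEquiv (x :: l) (x :: m) := by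
  simpa using h.append [x] []

theorem move_right (x y : G) (l : List G) :
    HurwitzEquiv (x :: y :: l) (y :: (y⁻¹ * x * y) :: l) :=
  Relation.EqvGen.rel _ _ (HurwitzStep.mk [] x y l)

theorem move_left (x y : G) (l : List G) :
    HurwitzEquiv (x :: y :: l) ((x * y * x⁻¹) :: x :: l) := by
  have h := (move_right (x * y * x⁻¹) x l).symm
  rwa [show x⁻¹ * (x * y * x⁻¹) * x = y by group] at h

theorem length_eq {l m : List G} (h : HurwitzEquiv l m) : l.length = m.length := by
  induction h with
  | rel l m hlm => cases hlm; simp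
  | refl l => rfl
  | symm l m _ ih => exact ih.symm
  | trans l m n _ _ ih ih' => exact ih.trans ih'

theorem prod_eq {l m : List G} (h : HurwitzEquiv l m) : l.prod = m.prod := by
  induction h with
  | rel l m hlm => cases hlm; simp [mul_assoc]
  | refl l => rfl
  | symm l m _ ih => exact ih.symm
  | trans l m n _ _ ih ih' => exact ih.trans ih'

theorem cons_append (x : G) (l r : List G) :
    HurwitzEquiv (x :: (l ++ r)) (l ++ (l.prod⁻¹ * x * l.prod) :: r) := by
  induction l generalizing x with
  | nil => simpa using refl (x :: r)
  | cons y l ih =>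
    simpa [mul_assoc] using (move_right x y (l ++ r)).trans ((ih (y⁻¹ * x * y)).cons y)

theorem append_cons (l : List G) (x : G) (r : List G) :
    HurwitzEquiv (l ++ x :: r) ((l.prod * x * l.prod⁻¹) :: (l ++ r)) := by
  simpa [mul_assoc] using (cons_append (l.prod * x * l.prod⁻¹) l r).symm

theorem append_comm (l m : List G) :
    HurwitzEquiv (l ++ m) (m ++ l.map fun x => m.prod⁻¹ * x * m.prod) := by
  induction l with
  | nil => simpa using refl m
  | cons x l ih => exact (ih.cons x).trans (cons_append x m _)

theorem exists_append_of_forall_or {P Q : G → Prop} (hQ : ∀ g x, Q x → Q (g⁻¹ * x * g))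
    (l : List G) (hl : ∀ x ∈ l, P x ∨ Q x) :
    ∃ l₁ l₂, HurwitzEquiv l (l₁ ++ l₂) ∧ (∀ x ∈ l₁, P x) ∧ ∀ x ∈ l₂, Q x := by
  induction l with
  | nil => exact ⟨[], [], refl _, by simp, by simp⟩
  | cons x l ih =>
    obtain ⟨hx, hl⟩ := List.forall_mem_cons.1 hl
    obtain ⟨l₁, l₂, hequiv, h₁, h₂⟩ := ih hl
    rcases hx with hx | hx
    · exact ⟨x :: l₁, l₂, hequiv.cons x, List.forall_mem_cons.2 ⟨hx, h₁⟩, h₂⟩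
    · exact ⟨l₁, _ :: l₂, (hequiv.cons x).trans (cons_append x l₁ l₂), h₁,
        List.forall_mem_cons.2 ⟨hQ _ x hx, h₂⟩⟩

theorem sameHurwitzOrbit {l m : List G} (h : HurwitzEquiv l m) {k : ℕ} {t s : Fin k → G}
    (ht : List.ofFn t = l) (hs : List.ofFn s = m) : SameHurwitzOrbit t s := by
  induction h generalizing t s with
  | rel l m hlm => exact .rel _ _ (hlm.isHurwitzMove ht hs)
  | refl l => rw [List.ofFn_injective (ht.trans hs.symm)]; exact .refl s
  | symm l m _ ih => exact .symm _ _ (ih hs ht)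
  | trans l m n hlm _ ih ih' =>
    obtain rfl : m.length = k := by simpa [← ht] using (length_eq hlm).symm
    exact .trans _ _ _ (ih ht (List.ofFn_get m)) (ih' (List.ofFn_get m) hs)

end HurwitzEquiv

namespace OrbitHasRepeat

theorem of_equiv {l m : List G} (h : HurwitzEquiv l m) (hm : OrbitHasRepeat m) :
    OrbitHasRepeat l := by
  obtain ⟨p, x, q, hm⟩ := hm
  exact ⟨p, x, q, h.trans hm⟩

theorem append {l : List G} (h : OrbitHasRepeat l) (p q : List G) :
    OrbitHasRepeat (p ++ l ++ q) := by
  obtain ⟨p', x, q', h⟩ := h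
  exact ⟨p ++ p', x, q' ++ q, by simpa using h.append p q⟩

theorem cons {l : List G} (h : OrbitHasRepeat l) (x : G) : OrbitHasRepeat (x :: l) := by
  simpa using h.append [x] []

theorem cons_cons_self (x : G) (l : List G) : OrbitHasRepeat (x :: x :: l) :=
  ⟨[], x, l, .refl _⟩

theorem of_braid [HasDistribNeg G] {c d : G} (h : c * d * c = d * c * d) (l : List G) :
    OrbitHasRepeat (-(c * d) :: c :: d :: l) := by
  have hleft : c⁻¹ * -(c * d) * c = -(d * c) := by simp
  have hright : -(d * c) * d * (-(d * c))⁻¹ = c := by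
    rw [mul_inv_eq_iff_eq_mul]
    simp [← mul_assoc, h]
  have hslide := (HurwitzEquiv.move_right (-(c * d)) c (d :: l)).trans
    ((HurwitzEquiv.move_left (c⁻¹ * -(c * d) * c) d l).cons c)
  rw [hleft, hright] at hslide
  exact (cons_cons_self c _).of_equiv hslide

theorem exists_sameHurwitzOrbit {k : ℕ} {t : Fin k → G} (h : OrbitHasRepeat (List.ofFn t)) :
    ∃ s : Fin k → G, SameHurwitzOrbit t s ∧ HasConsecutiveEqualPair s := by
  obtain ⟨p, x, q, h⟩ := h
  obtain rfl : (p ++ x :: x :: q).length = k := by simpa using h.length_eq.symm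
  refine ⟨_, h.sameHurwitzOrbit rfl (List.ofFn_get _), p.length, by simp, by simp⟩

end OrbitHasRepeat

theorem SameHurwitzOrbit.map (f : G →* H) {k : ℕ} {t s : Fin k → G} (h : SameHurwitzOrbit t s) :
    SameHurwitzOrbit (f ∘ t) (f ∘ s) := by
  induction h with
  | rel t s hts =>
    obtain ⟨i, hi, hfst, hsnd, hrest⟩ := hts
    exact .rel _ _ ⟨i, hi, by simp [hfst], by simp [hsnd],
      fun j hj hj' => by simp [hrest j hj hj']⟩
  | refl t => exact .refl _
  | symm t s _ ih => exact .symm _ _ ih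
  | trans t s r _ _ ih ih' => exact .trans _ _ _ ih ih'

theorem HasConsecutiveEqualPair.map (f : G →* H) {k : ℕ} {t : Fin k → G}
    (h : HasConsecutiveEqualPair t) : HasConsecutiveEqualPair (f ∘ t) := by
  obtain ⟨i, hi, heq⟩ := h
  exact ⟨i, hi, congrArg f heq⟩

end Hurwitz

section Transvections

/-- The transvection `(x, y) ↦ (x + y, y)` of `𝔽₃²`. -/
def upper : SL(2, ZMod 3) := ⟨!![1, 1; 0, 1], by decide⟩

/-- The transvection `(x, y) ↦ (x, y - x)` of `𝔽₃²`; the sign makes it conjugate to `upper`. -/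
def lower : SL(2, ZMod 3) := ⟨!![1, 0; -1, 1], by decide⟩

/-- The two conjugacy classes of transvections in `SL(2, 𝔽₃)`: that of `upper` for `s = 1` and that
of `upper⁻¹` for `s = -1`. -/
def transvectionClass (s : ℤˣ) : Finset SL(2, ZMod 3) :=
  {upper ^ (s : ℤ), lower ^ (s : ℤ), (upper⁻¹ * lower * upper) ^ (s : ℤ),
    (upper * lower * upper⁻¹) ^ (s : ℤ)}

variable {s r : ℤˣ} {a b c d : SL(2, ZMod 3)}

theorem exists_eq_upper_pow_mul_lower_pow : ∀ g : SL(2, ZMod 3), ∃ i j m n : Fin 3,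
    g = upper ^ (i : ℕ) * lower ^ (j : ℕ) * upper ^ (m : ℕ) * lower ^ (n : ℕ) := by
  decide +kernel

theorem conj_mem_transvectionClass : ∀ s, ∀ g, ∀ a ∈ transvectionClass s,
    g⁻¹ * a * g ∈ transvectionClass s := by
  decide +kernel

theorem transvectionClass_triple : ∀ s, ∀ a ∈ transvectionClass s, ∀ b ∈ transvectionClass s,
    ∀ c ∈ transvectionClass s,
    a = b ∨ b = c ∨ c = a ∨ c = b⁻¹ * a * b ∨ a * b * c = -1 := by
  decide +kernel

theorem eq_or_eq_inv_of_commute_transvections : ∀ s, ∀ a ∈ transvectionClass s, ∀ r,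
    ∀ b ∈ transvectionClass r, a * b = b * a → b = a ∨ b = a⁻¹ := by
  decide +kernel

theorem neg_mul_mem_transvectionClass : ∀ s, ∀ c ∈ transvectionClass (-s),
    ∀ d ∈ transvectionClass (-s), c ≠ d → -(c * d) ∈ transvectionClass s := by
  decide +kernel

theorem transvectionClass_braid : ∀ s, ∀ a ∈ transvectionClass s, ∀ b ∈ transvectionClass s,
    a * b * a = b * a * b := by
  decide +kernel

theorem orbitHasRepeat_triple (ha : a ∈ transvectionClass s) (hb : b ∈ transvectionClass s)
    (hc : c ∈ transvectionClass s) (habc : a * b * c ≠ -1) : OrbitHasRepeat [a, b, c] := by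
  rcases transvectionClass_triple s a ha b hb c hc with rfl | rfl | rfl | rfl | h
  · exact .cons_cons_self a [c]
  · exact (OrbitHasRepeat.cons_cons_self b []).cons a
  · exact ((OrbitHasRepeat.cons_cons_self c []).cons _).of_equiv (.move_left c b [c])
  · exact ((OrbitHasRepeat.cons_cons_self _ []).cons b).of_equiv (.move_right a b _)
  · exact absurd h habc

theorem orbitHasRepeat_three_append_inv (ha : a ∈ transvectionClass s)
    (hb : b ∈ transvectionClass s) (hc : c ∈ transvectionClass s) (habc : a * b * c = -1) :
    OrbitHasRepeat [a, b, c, c⁻¹] := by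
  by_cases hbc : b * c = c * b
  · rcases eq_or_eq_inv_of_commute_transvections s b hb s c hc hbc with rfl | rfl
    · exact (OrbitHasRepeat.cons_cons_self c _).cons a
    · have hswap : HurwitzEquiv [a, b, b⁻¹, b] [a, b⁻¹, b, b] := by
        simpa using (HurwitzEquiv.move_right b b⁻¹ [b]).cons a
      rw [inv_inv]
      exact (((OrbitHasRepeat.cons_cons_self b []).cons _).cons a).of_equiv hswap
  have hslide : HurwitzEquiv [a, b, c, c⁻¹] [a * c⁻¹ * a⁻¹, a, (c⁻¹)⁻¹ * b * c⁻¹, c] := by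
    have hswap : HurwitzEquiv [a, b, c, c⁻¹] [a, b, c⁻¹, c] := by
      simpa using ((HurwitzEquiv.move_right c c⁻¹ []).cons b).cons a
    exact (hswap.trans ((HurwitzEquiv.move_right b c⁻¹ [c]).cons a)).trans (.move_left a c⁻¹ _)
  have hne : a * ((c⁻¹)⁻¹ * b * c⁻¹) * c ≠ -1 := by
    intro h
    refine hbc (mul_left_cancel (a := a) ?_)
    rw [← mul_assoc, habc, ← h]
    group
  have hb' := conj_mem_transvectionClass s c⁻¹ b hb
  exact ((orbitHasRepeat_triple ha hb' hc hne).cons _).of_equiv hslide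

theorem orbitHasRepeat_three_append_singleton (ha : a ∈ transvectionClass s)
    (hb : b ∈ transvectionClass s) (hc : c ∈ transvectionClass s)
    (hd : d ∈ transvectionClass r) : OrbitHasRepeat [a, b, c, d] := by
  by_cases habc : a * b * c = -1
  swap
  · exact (orbitHasRepeat_triple ha hb hc habc).append [] [d]
  by_cases hcd : c * d = d * c
  · rcases eq_or_eq_inv_of_commute_transvections s c hc r d hd hcd with rfl | rfl
    · exact ((OrbitHasRepeat.cons_cons_self d []).cons b).cons a
    · exact orbitHasRepeat_three_append_inv ha hb hc habc
  have hslide : HurwitzEquiv [a, b, c, d] [a * b * d * (a * b)⁻¹, a, b, d⁻¹ * c * d] := by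
    have h := HurwitzEquiv.append_cons [a, b] d [d⁻¹ * c * d]
    exact (((HurwitzEquiv.move_right c d []).cons b).cons a).trans (by simpa using h)
  have hne : a * b * (d⁻¹ * c * d) ≠ -1 := by
    intro h
    have hconj : d⁻¹ * c * d = c := mul_left_cancel (h.trans habc.symm)
    exact hcd (by rwa [mul_assoc, inv_mul_eq_iff_eq_mul] at hconj)
  have hc' := conj_mem_transvectionClass s d c hc
  exact ((orbitHasRepeat_triple ha hb hc' hne).cons _).of_equiv hslide

theorem orbitHasRepeat_two_append_two (ha : a ∈ transvectionClass s) (hb : b ∈ transvectionClass s)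
    (hc : c ∈ transvectionClass (-s)) (hd : d ∈ transvectionClass (-s))
    (habcd : a * b * (c * d) ≠ 1) : OrbitHasRepeat [a, b, c, d] := by
  by_cases hcd : c = d
  · subst hcd
    exact ((OrbitHasRepeat.cons_cons_self c []).cons b).cons a
  have hbraid : OrbitHasRepeat [-(c * d), c, d] :=
    .of_braid (transvectionClass_braid _ c hc d hd) []
  rcases transvectionClass_triple s a ha b hb _ (neg_mul_mem_transvectionClass s c hc d hd hcd)
    with rfl | rfl | h | h | h
  · exact .cons_cons_self a _
  · exact hbraid.cons a
  · subst h
    exact (hbraid.cons _).of_equiv (.move_left _ b [c, d])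
  · rw [h] at hbraid
    exact (hbraid.cons b).of_equiv (.move_right a b [c, d])
  · exact absurd (by simpa using h) habcd

theorem orbitHasRepeat_of_three_le_length {l m : List SL(2, ZMod 3)}
    (hl : ∀ x ∈ l, x ∈ transvectionClass s) (hm : ∀ x ∈ m, x ∈ transvectionClass r)
    (hl3 : 3 ≤ l.length) (hlm : 4 ≤ (l ++ m).length) : OrbitHasRepeat (l ++ m) := by
  obtain ⟨a, b, c, l, rfl⟩ : ∃ a b c l', l = a :: b :: c :: l' := by
    match l, hl3 with
    | a :: b :: c :: l', _ => exact ⟨a, b, c, l', rfl⟩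
  simp only [List.forall_mem_cons] at hl
  obtain ⟨ha, hb, hc, hl⟩ := hl
  obtain ⟨d, n, hn⟩ : ∃ d n, l ++ m = d :: n :=
    List.exists_cons_of_length_pos (by simp only [List.length_append, List.length_cons] at *; omega)
  obtain ⟨q, hd⟩ : ∃ q, d ∈ transvectionClass q := by
    have hmem : d ∈ l ++ m := by simp [hn]
    exact (List.mem_append.1 hmem).elim (fun h => ⟨s, hl d h⟩) fun h => ⟨r, hm d h⟩
  simpa [hn] using (orbitHasRepeat_three_append_singleton ha hb hc hd).append [] n

theorem orbitHasRepeat_of_forall_transvection (l : List SL(2, ZMod 3))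
    (hl : ∀ x ∈ l, ∃ s, x ∈ transvectionClass s) (h4 : 4 ≤ l.length)
    (hprod : l.length = 4 → l.prod ≠ 1) : OrbitHasRepeat l := by
  have hclass : ∀ x ∈ l, x ∈ transvectionClass 1 ∨ x ∈ transvectionClass (-1) := by
    intro x hx
    obtain ⟨s, hs⟩ := hl x hx
    rcases Int.units_eq_one_or s with rfl | rfl
    exacts [.inl hs, .inr hs]
  obtain ⟨l₁, l₂, hsort, h₁, h₂⟩ := HurwitzEquiv.exists_append_of_forall_or
    (conj_mem_transvectionClass (-1)) l hclass
  rw [hsort.length_eq] at h4 hprod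
  rw [hsort.prod_eq] at hprod
  refine .of_equiv hsort ?_
  by_cases hl₁ : 3 ≤ l₁.length
  · exact orbitHasRepeat_of_three_le_length h₁ h₂ hl₁ h4
  by_cases hl₂ : 3 ≤ l₂.length
  · refine .of_equiv (.append_comm l₁ l₂) (orbitHasRepeat_of_three_le_length (r := 1) h₂ ?_ hl₂ ?_)
    · simpa using fun x hx => conj_mem_transvectionClass 1 _ x (h₁ x hx)
    · simpa [add_comm] using h4
  rw [List.length_append] at h4 hprod
  obtain ⟨a, b, rfl⟩ := List.length_eq_two.1 (show l₁.length = 2 by omega)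
  obtain ⟨c, d, rfl⟩ := List.length_eq_two.1 (show l₂.length = 2 by omega)
  simp only [List.forall_mem_cons] at h₁ h₂
  exact orbitHasRepeat_two_append_two h₁.1 h₁.2.1 h₂.1 h₂.2.1 (by simpa [mul_assoc] using hprod)

end Transvections

section WeilRepresentation

/-- The cyclotomic field `ℚ(ω)`. Unlike `ℂ`, it has decidable equality that the kernel can
evaluate. -/
abbrev EisensteinField : Type := QuadraticAlgebra ℚ (-1) (-1)

instance : Fact (∀ r : ℚ, r ^ 2 ≠ -1 + -1 * r) :=
  ⟨fun r h => by nlinarith [sq_nonneg (2 * r + 1)]⟩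

/-- The additive character `x ↦ ω ^ x` of `𝔽₃`. -/
def cubicChar (x : ZMod 3) : EisensteinField := QuadraticAlgebra.omega ^ x.val

/-- The matrix of `g` in the even part of the Weil representation of `SL(2, 𝔽₃)`, that is, on the
even functions on `𝔽₃`. The basis consists of multiples of the indicator functions of `{0}` and
`{1, -1}`, scaled so that `upper` and `lower` act by `AMat` and `BMat`. Here `valMinAbs` is the
quadratic character of `𝔽₃`, and `⟨1 / 3, 2 / 3⟩` is `√-3 / 3`. -/
def weilMatrix (g : SL(2, ZMod 3)) : Matrix (Fin 2) (Fin 2) EisensteinField :=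
  if g 1 0 = 0 then
    ((g 0 0).valMinAbs : EisensteinField) • !![1, 0; 0, cubicChar (g 0 0 * g 0 1)]
  else
    ((g 1 0).valMinAbs : EisensteinField) •
      !![-⟨1 / 3, 2 / 3⟩, -cubicChar (g 1 0 * g 1 1);
        ⟨2 / 3, 0⟩ * cubicChar (g 1 0 * g 0 0),
        ⟨1 / 3, 2 / 3⟩ * cubicChar (g 1 0 * (g 0 0 + g 1 1))]

theorem weilMatrix_mul_generator : ∀ g, weilMatrix (g * upper) = weilMatrix g * weilMatrix upper ∧
    weilMatrix (g * lower) = weilMatrix g * weilMatrix lower := by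
  decide +kernel

theorem weilMatrix_mul_generator_pow (g : SL(2, ZMod 3)) (n : ℕ) :
    weilMatrix (g * upper ^ n) = weilMatrix g * weilMatrix upper ^ n ∧
      weilMatrix (g * lower ^ n) = weilMatrix g * weilMatrix lower ^ n := by
  induction n with
  | zero => simp
  | succ n ih =>
    simp only [pow_succ, ← mul_assoc, weilMatrix_mul_generator, ih, and_self]

theorem weilMatrix_one : weilMatrix 1 = 1 := by decide +kernel

theorem weilMatrix_mul (g h : SL(2, ZMod 3)) :
    weilMatrix (g * h) = weilMatrix g * weilMatrix h := by
  have hu g n := (weilMatrix_mul_generator_pow g n).1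
  have hl g n := (weilMatrix_mul_generator_pow g n).2
  obtain ⟨i, j, m, n, rfl⟩ := exists_eq_upper_pow_mul_lower_pow h
  have h1 := hu 1 i
  rw [one_mul, weilMatrix_one, one_mul] at h1
  simp only [← mul_assoc, hu, hl, h1]

theorem exists_mem_transvectionClass_of_det : ∀ g : SL(2, ZMod 3), g ≠ 1 →
    (weilMatrix g - 1).det = 0 → ∃ s, g ∈ transvectionClass s := by
  decide +kernel

theorem omega_sq : ω ^ 2 = -1 - ω := by
  have hprim : IsPrimitiveRoot ω 3 := by
    simpa [ω] using Complex.isPrimitiveRoot_exp 3 (by norm_num)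
  have hsum := hprim.geom_sum_eq_zero (by norm_num)
  simp only [Finset.sum_range_succ, Finset.sum_range_zero, pow_zero, pow_one] at hsum
  linear_combination hsum

/-- The embedding of `ℚ(ω)` into `ℂ`. -/
def eisensteinEmbedding : EisensteinField →ₐ[ℚ] ℂ :=
  QuadraticAlgebra.lift ⟨ω, by simp only [neg_smul, one_smul]; linear_combination omega_sq⟩

theorem eisensteinEmbedding_injective : Function.Injective eisensteinEmbedding :=
  eisensteinEmbedding.toRingHom.injective

/-- The even part of the Weil representation, as a homomorphism into `GL(2, ℂ)`. -/
def weilGL : SL(2, ZMod 3) →* GL (Fin 2) ℂ :=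
  MonoidHom.toHomUnits
    { toFun := fun g => eisensteinEmbedding.mapMatrix (weilMatrix g)
      map_one' := by rw [weilMatrix_one, map_one]
      map_mul' := fun g h => by rw [weilMatrix_mul, map_mul] }

theorem coe_weilGL (g : SL(2, ZMod 3)) :
    (weilGL g : Matrix (Fin 2) (Fin 2) ℂ) = eisensteinEmbedding.mapMatrix (weilMatrix g) := rfl

theorem weilMatrix_upper : weilMatrix upper = !![1, 0; 0, ⟨0, 1⟩] := by decide +kernel

theorem weilMatrix_lower :
    weilMatrix lower = !![⟨1 / 3, 2 / 3⟩, ⟨-1, -1⟩; ⟨2 / 3, 2 / 3⟩, ⟨2 / 3, 1 / 3⟩] := by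
  decide +kernel

theorem eisensteinEmbedding_mk (p q : ℚ) : eisensteinEmbedding ⟨p, q⟩ = p + q * ω := by
  change p • (1 : ℂ) + q • ω = p + q * ω
  simp [Algebra.smul_def]

theorem coe_weilGL_upper : (weilGL upper : Matrix (Fin 2) (Fin 2) ℂ) = AMat := by
  ext i j
  fin_cases i <;> fin_cases j <;>
    simp [coe_weilGL, weilMatrix_upper, AMat, eisensteinEmbedding_mk]

theorem coe_weilGL_lower : (weilGL lower : Matrix (Fin 2) (Fin 2) ℂ) = BMat := by
  ext i j
  fin_cases i <;> fin_cases j <;>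
    simp [coe_weilGL, weilMatrix_lower, BMat, eisensteinEmbedding_mk, omega_sq] <;> ring

theorem weilGL_mem_G4 (g : SL(2, ZMod 3)) : weilGL g ∈ G4 := by
  have hupper : weilGL upper ∈ G4 := Subgroup.subset_closure (.inl coe_weilGL_upper)
  have hlower : weilGL lower ∈ G4 := Subgroup.subset_closure (.inr coe_weilGL_lower)
  obtain ⟨i, j, m, n, rfl⟩ := exists_eq_upper_pow_mul_lower_pow g
  simp only [map_mul, map_pow]
  exact mul_mem (mul_mem (mul_mem (pow_mem hupper _) (pow_mem hlower _)) (pow_mem hupper _))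
    (pow_mem hlower _)

/-- The even part of the Weil representation, as a homomorphism onto `G₄`. -/
def weilG4 : SL(2, ZMod 3) →* G4 := weilGL.codRestrict G4 weilGL_mem_G4

theorem weilG4_surjective : Function.Surjective weilG4 := by
  have hle : G4 ≤ weilGL.range := by
    refine (Subgroup.closure_le _).2 ?_
    rintro g (hA | hB)
    · exact ⟨upper, Units.ext (coe_weilGL_upper.trans hA.symm)⟩
    · exact ⟨lower, Units.ext (coe_weilGL_lower.trans hB.symm)⟩
  intro t
  obtain ⟨g, hg⟩ := hle t.2
  exact ⟨g, Subtype.ext hg⟩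

theorem exists_mem_transvectionClass_of_isReflection {g : SL(2, ZMod 3)}
    (h : IsReflection (weilG4 g)) : ∃ s, g ∈ transvectionClass s := by
  obtain ⟨hne, hdet⟩ := h
  refine exists_mem_transvectionClass_of_det g (fun hg => hne (by rw [hg, map_one])) ?_
  apply eisensteinEmbedding_injective
  rw [AlgHom.map_det, map_sub, map_one, map_zero]
  exact hdet

end WeilRepresentation

theorem IsCoxeter.ne_one {c : G4} (hc : IsCoxeter c) : c ≠ 1 := by
  rintro rfl
  obtain ⟨ζ, hζ, hdet⟩ := hc
  have hζ1 : 1 - ζ = 0 := by simpa [mat, Matrix.det_fin_two] using hdet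
  exact hζ.ne_one (by norm_num) (sub_eq_zero.1 hζ1).symm

theorem g4_length_ge_four_both_classes_pair_general {k : ℕ} (hk : 4 ≤ k) (t : Fin k → G4)
    (ht : ∀ i, IsReflection (t i)) (hprod : k = 4 → (List.ofFn t).prod ≠ 1) :
    ∃ s : Fin k → G4, SameHurwitzOrbit t s ∧ HasConsecutiveEqualPair s := by
  choose u hu using fun i => weilG4_surjective (t i)
  obtain rfl : t = weilG4 ∘ u := funext fun i => (hu i).symm
  have hclass : ∀ x ∈ List.ofFn u, ∃ s, x ∈ transvectionClass s :=
    List.forall_mem_ofFn_iff.2 fun i => exists_mem_transvectionClass_of_isReflection (ht i)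
  have hprod' : (List.ofFn u).length = 4 → (List.ofFn u).prod ≠ 1 := by
    intro hlen hone
    refine hprod (by simpa using hlen) ?_
    rw [← List.map_ofFn, ← map_list_prod, hone, map_one]
  obtain ⟨s, hus, hs⟩ := (orbitHasRepeat_of_forall_transvection (List.ofFn u) hclass
    (by simpa using hk) hprod').exists_sameHurwitzOrbit
  exact ⟨weilG4 ∘ s, hus.map weilG4, hs.map weilG4⟩

theorem g4_length_ge_four_both_classes_pair (k : ℕ) (hk : 4 ≤ k)
    (c : G4) (hc : IsCoxeter c) (t : Fin k → G4)
    (ht : ∀ i, IsReflection (t i)) (hp : (List.ofFn t).prod = c)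
    (hR1 : ∃ i, t i ∈ R1) (hR2 : ∃ i, t i ∈ R2) :
    ∃ s : Fin k → G4, SameHurwitzOrbit t s ∧ HasConsecutiveEqualPair s :=
  g4_length_ge_four_both_classes_pair_general hk t ht fun _ => hp ▸ hc.ne_one
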